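/- Let ℋ be a finite-dimensional complex inner product space, N ≥ 2, U_0, …, U_{N−2} unitary operators on ℋ, and 𝒞 the associated clock operator on ℂ^N ⊗ ℋ. Define 𝒜 = 𝒞 + |0⟩⟨0| ⊗ I. If ψ_0, …, ψ_{N−1} ∈ ℋ satisfy ψ_{n+1} = U_n ψ_n for all 0 ≤ n ≤ N−2, then the history state Ψ = ∑_{n=0}^{N−1} |n⟩ ⊗ ψ_n satisfies 𝒜 Ψ = |0⟩ ⊗ ψ_0. -/

import Mathlib

open scoped TensorProduct

/-- The rank-one operator `|m⟩⟨n|` on `ℂ^N`, where `|0⟩, …, |N−1⟩` is the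
standard orthonormal basis of `ℂ^N`. -/
noncomputable def ketbra (N : ℕ) (m n : Fin N) :
    EuclideanSpace ℂ (Fin N) →ₗ[ℂ] EuclideanSpace ℂ (Fin N) :=
  (LinearMap.toSpanSingleton ℂ (EuclideanSpace ℂ (Fin N))
      (EuclideanSpace.single m 1)).comp
    ((innerSL ℂ (EuclideanSpace.single n (1 : ℂ))).toLinearMap)

/-- The Feynman clock operator
`𝒞 = ∑_{n=0}^{N−2} (|n+1⟩⟨n+1| ⊗ I − |n+1⟩⟨n| ⊗ U_n + |n⟩⟨n| ⊗ I
  − |n⟩⟨n+1| ⊗ U_n†)` on `ℂ^N ⊗ ℋ`. -/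
noncomputable def clockOp {H : Type*} [NormedAddCommGroup H]
    [InnerProductSpace ℂ H] [FiniteDimensional ℂ H]
    (N : ℕ) (U : ℕ → (H →ₗ[ℂ] H)) :
    (EuclideanSpace ℂ (Fin N)) ⊗[ℂ] H →ₗ[ℂ] (EuclideanSpace ℂ (Fin N)) ⊗[ℂ] H :=
  ∑ n ∈ (Finset.range (N - 1)).attach,
    (TensorProduct.map
        (ketbra N ⟨n.1 + 1, by have := Finset.mem_range.mp n.2; omega⟩
                  ⟨n.1 + 1, by have := Finset.mem_range.mp n.2; omega⟩)
        LinearMap.id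
      - TensorProduct.map
        (ketbra N ⟨n.1 + 1, by have := Finset.mem_range.mp n.2; omega⟩
                  ⟨n.1, by have := Finset.mem_range.mp n.2; omega⟩)
        (U n.1)
      + TensorProduct.map
        (ketbra N ⟨n.1, by have := Finset.mem_range.mp n.2; omega⟩
                  ⟨n.1, by have := Finset.mem_range.mp n.2; omega⟩)
        LinearMap.id
      - TensorProduct.map
        (ketbra N ⟨n.1, by have := Finset.mem_range.mp n.2; omega⟩
                  ⟨n.1 + 1, by have := Finset.mem_range.mp n.2; omega⟩)
        (LinearMap.adjoint (U n.1)))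

/-- The history state `∑ₙ |n⟩ ⊗ ψₙ` in `ℂ^N ⊗ H`, recording `ψₙ` at clock time `n`. The sequence
`ψ` is arbitrary: that it evolves under the `Uₙ` is left to the lemmas. -/
noncomputable def historyState {N : ℕ} {H : Type*} [AddCommMonoid H] [Module ℂ H]
    (ψ : Fin N → H) : EuclideanSpace ℂ (Fin N) ⊗[ℂ] H :=
  ∑ n : Fin N, EuclideanSpace.single n (1 : ℂ) ⊗ₜ[ℂ] ψ n

theorem ketbra_apply {N : ℕ} (m n : Fin N) (v : EuclideanSpace ℂ (Fin N)) :
    ketbra N m n v = v n • EuclideanSpace.single m (1 : ℂ) := by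
  simp [ketbra, EuclideanSpace.inner_single_left]

theorem map_ketbra_historyState {N : ℕ} {H K : Type*} [AddCommMonoid H] [Module ℂ H]
    [AddCommMonoid K] [Module ℂ K] (m n : Fin N) (T : H →ₗ[ℂ] K) (ψ : Fin N → H) :
    TensorProduct.map (ketbra N m n) T (historyState ψ)
      = EuclideanSpace.single m (1 : ℂ) ⊗ₜ[ℂ] T (ψ n) := by
  simp [historyState, ketbra_apply, ite_smul, TensorProduct.ite_tmul]

section

variable {H : Type*} [NormedAddCommGroup H] [InnerProductSpace ℂ H] [FiniteDimensional ℂ H]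
  {N : ℕ} {U : ℕ → (H →ₗ[ℂ] H)} {ψ : ℕ → H}

theorem clockOp_historyState_eq_zero
    (hU : ∀ n, n + 1 < N → LinearMap.adjoint (U n) (U n (ψ n)) = ψ n)
    (hψ : ∀ n, n + 1 < N → ψ (n + 1) = U n (ψ n)) :
    clockOp N U (historyState fun n : Fin N ↦ ψ n) = 0 := by
  rw [clockOp, LinearMap.sum_apply]
  -- The `n`-th summand of `𝒞` sends the history state to
  -- `|n+1⟩ ⊗ (ψₙ₊₁ - Uₙ ψₙ) + |n⟩ ⊗ (ψₙ - Uₙ† ψₙ₊₁)`, and both brackets vanish.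
  refine Finset.sum_eq_zero fun n _ ↦ ?_
  have hn : n.1 + 1 < N := Nat.add_lt_of_lt_sub (Finset.mem_range.mp n.2)
  simp only [LinearMap.sub_apply, LinearMap.add_apply, map_ketbra_historyState,
    LinearMap.id_apply, hψ n hn, hU n hn, sub_self, zero_add]

theorem clockOp_plus_projector_history_state_general (hN : 0 < N)
    (hU : ∀ n, n + 1 < N → LinearMap.adjoint (U n) (U n (ψ n)) = ψ n)
    (hψ : ∀ n, n + 1 < N → ψ (n + 1) = U n (ψ n)) :
    (clockOp N U + TensorProduct.map (ketbra N ⟨0, hN⟩ ⟨0, hN⟩) (LinearMap.id : H →ₗ[ℂ] H))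
        (historyState fun n : Fin N ↦ ψ n)
      = EuclideanSpace.single (⟨0, hN⟩ : Fin N) (1 : ℂ) ⊗ₜ[ℂ] ψ 0 := by
  rw [LinearMap.add_apply, clockOp_historyState_eq_zero hU hψ, zero_add,
    map_ketbra_historyState, LinearMap.id_apply]

end

/-- With `𝒜 = 𝒞 + |0⟩⟨0| ⊗ I`, if `ψ_{n+1} = U_n ψ_n` for all `0 ≤ n ≤ N−2`
with `U_n` unitary, then the history state `Ψ = ∑_{n=0}^{N−1} |n⟩ ⊗ ψ_n`
satisfies `𝒜 Ψ = |0⟩ ⊗ ψ_0`. -/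
theorem clockOp_plus_projector_history_state {H : Type*} [NormedAddCommGroup H]
    [InnerProductSpace ℂ H] [FiniteDimensional ℂ H]
    (N : ℕ) (hN : 2 ≤ N) (U : ℕ → (H →ₗ[ℂ] H))
    (hU : ∀ n ≤ N - 2,
      LinearMap.adjoint (U n) ∘ₗ U n = LinearMap.id ∧
      U n ∘ₗ LinearMap.adjoint (U n) = LinearMap.id)
    (ψ : ℕ → H) (hψ : ∀ n ≤ N - 2, ψ (n + 1) = U n (ψ n))
    (𝒜 : (EuclideanSpace ℂ (Fin N)) ⊗[ℂ] H →ₗ[ℂ] (EuclideanSpace ℂ (Fin N)) ⊗[ℂ] H)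
    (h𝒜 : 𝒜 = clockOp N U
      + TensorProduct.map
          (ketbra N ⟨0, by omega⟩ ⟨0, by omega⟩) LinearMap.id) :
    𝒜 (∑ n : Fin N, (EuclideanSpace.single n (1 : ℂ)) ⊗ₜ[ℂ] ψ n.1)
      = (EuclideanSpace.single (⟨0, by omega⟩ : Fin N) (1 : ℂ)) ⊗ₜ[ℂ] ψ 0 := by
  rw [h𝒜]
  exact clockOp_plus_projector_history_state_general (by omega)
    (fun n hn ↦ LinearMap.congr_fun (hU n (by omega)).1 (ψ n)) (fun n hn ↦ hψ n (by omega))
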